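/- For every positive integer w, there exists a subset S of the set of irreducible complex characters of S_{2w}, of cardinality p(2w) − p(w) (where p denotes the partition-counting function), such that the set {Ind_{S_w × S_w}^{S_{2w}}(χ ⊠ χ) : χ ∈ Irr(S_w)} ∪ S is a ℤ-basis of the group ℤIrr(S_{2w}) of virtual characters of S_{2w}. -/

import Mathlib

open scoped Classical

/-- `f : G → ℂ` is an irreducible complex character of `G`. -/
def IsIrrChar (G : Type) [Group G] (f : G → ℂ) : Prop :=
  ∃ V : FDRep ℂ G, CategoryTheory.Simple V ∧ FDRep.character V = f

/-- Induction of a class function `u` on `H` along a (typically injective) group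
homomorphism `φ : H →* G`; for the inclusion of a subgroup this is the usual induced class
function `Ind_H^G u (g) = |H|⁻¹ ∑_{x ∈ G, x⁻¹gx ∈ H} u (x⁻¹gx)`. -/
noncomputable def indHom {H G : Type*} [Group H] [Fintype H] [Group G] [Fintype G]
    (φ : H →* G) (u : H → ℂ) : G → ℂ :=
  fun g => (Nat.card H : ℂ)⁻¹ *
    ∑ x : G, ∑ h : H, if φ h = x⁻¹ * g * x then u h else 0

/-- The set of characters `Ind_{S_w × S_w}^{S_{2w}} (χ ⊠ χ)` for `χ ∈ Irr(S_w)`. -/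
noncomputable def gammaSet (w : ℕ) : Set (Equiv.Perm (Fin w ⊕ Fin w) → ℂ) :=
  (fun χ : Equiv.Perm (Fin w) → ℂ =>
    indHom (Equiv.Perm.sumCongrHom (Fin w) (Fin w)) (fun p => χ p.1 * χ p.2)) ''
      {f | IsIrrChar (Equiv.Perm (Fin w)) f}

open Representation

section Characters

variable {G : Type} [Group G] [Fintype G]

/-- The scalar product of two functions on a finite group, bilinear form version. -/
noncomputable def charPairing (f g : G → ℂ) : ℂ :=
  (Nat.card G : ℂ)⁻¹ * ∑ x : G, f x * g x⁻¹

omit [Fintype G] in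
lemma IsIrrChar.map_conj {f : G → ℂ} (hf : IsIrrChar G f) (g h : G) : f (h * g * h⁻¹) = f g := by
  obtain ⟨V, -, rfl⟩ := hf
  exact V.char_conj g h

lemma charPairing_eq_finrank {V W : Type} [AddCommGroup V] [Module ℂ V] [FiniteDimensional ℂ V]
    [AddCommGroup W] [Module ℂ W] [FiniteDimensional ℂ W]
    (ρ : Representation ℂ G V) (σ : Representation ℂ G W) :
    charPairing σ.character ρ.character = Module.finrank ℂ (IntertwiningMap ρ σ) := by
  have := invertibleOfNonzero (NeZero.ne (Nat.card G : ℂ))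
  exact card_inv_mul_sum_char_mul_char_eq_finrank ρ σ

lemma isIrrChar_of_finrank_eq_one {V : Type} [AddCommGroup V] [Module ℂ V] [FiniteDimensional ℂ V]
    (ρ : Representation ℂ G V) (h : Module.finrank ℂ (IntertwiningMap ρ ρ) = 1) :
    IsIrrChar G ρ.character := by
  refine ⟨FDRep.of ρ, ?_, rfl⟩
  rw [FDRep.simple_iff_char_is_norm_one]
  have := charPairing_eq_finrank ρ ρ
  rw [h, charPairing, inv_mul_eq_iff_eq_mul₀ (NeZero.ne _)] at this
  rw [Nat.cast_one, mul_one] at this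
  exact this

lemma IsIrrChar.charPairing_eq {f g : G → ℂ} (hf : IsIrrChar G f) (hg : IsIrrChar G g) :
    charPairing f g = if f = g then 1 else 0 := by
  obtain ⟨V, hV, rfl⟩ := hf
  obtain ⟨W, hW, rfl⟩ := hg
  have := invertibleOfNonzero (NeZero.ne (Nat.card G : ℂ))
  have key : ∀ U : FDRep ℂ G, CategoryTheory.Simple U →
      charPairing V.character U.character = if Nonempty (V ≅ U) then 1 else 0 :=
    fun U hU => FDRep.char_orthonormal V U
  split_ifs with h
  · rw [← h, key V hV, if_pos ⟨CategoryTheory.Iso.refl V⟩]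
  · rw [key W hW, if_neg]
    rintro ⟨i⟩
    exact h (FDRep.char_iso i)

lemma charPairing_sum_left {ι : Type*} (s : Finset ι) (a : ι → ℂ) (f : ι → G → ℂ) (g : G → ℂ) :
    charPairing (∑ i ∈ s, a i • f i) g = ∑ i ∈ s, a i * charPairing (f i) g := by
  simp only [charPairing, Finset.sum_apply, Pi.smul_apply, smul_eq_mul, Finset.sum_mul,
    Finset.mul_sum]
  rw [Finset.sum_comm]
  exact Finset.sum_congr rfl fun i _ => Finset.sum_congr rfl fun x _ => by ring

lemma charPairing_sum_smul_of_isIrrChar {ι : Type*} [Fintype ι] {χ : ι → G → ℂ}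
    (hχ : ∀ i, IsIrrChar G (χ i)) (hinj : Function.Injective χ) (a : ι → ℂ) (i : ι) :
    charPairing (∑ j, a j • χ j) (χ i) = a i := by
  rw [charPairing_sum_left, Finset.sum_eq_single i]
  · simp [(hχ i).charPairing_eq (hχ i)]
  · intro j _ hj
    rw [(hχ j).charPairing_eq (hχ i), if_neg (hinj.ne hj), mul_zero]
  · simp

lemma linearIndependent_of_isIrrChar {ι : Type*} [Fintype ι] {χ : ι → G → ℂ}
    (hχ : ∀ i, IsIrrChar G (χ i)) (hinj : Function.Injective χ) : LinearIndependent ℂ χ := by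
  rw [Fintype.linearIndependent_iff]
  intro a ha i
  rw [← charPairing_sum_smul_of_isIrrChar hχ hinj a i, ha]
  simp [charPairing]

/-- If conjugacy classes are separated by a map to a type with at most as many elements as a family
of distinct irreducible characters, then this family spans the class functions. -/
lemma eq_sum_charPairing_smul {ι P : Type*} [Fintype ι] [Fintype P] {χ : ι → G → ℂ}
    (hχ : ∀ i, IsIrrChar G (χ i)) (hinj : Function.Injective χ)
    {π : G → P} (hπ : ∀ x y, π x = π y → IsConj x y) (hcard : Fintype.card P ≤ Fintype.card ι)
    {f : G → ℂ} (hf : ∀ g h, f (h * g * h⁻¹) = f g) :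
    f = ∑ i, charPairing f (χ i) • χ i := by
  have hmem : ∀ f : G → ℂ, (∀ g h, f (h * g * h⁻¹) = f g) →
      f ∈ LinearMap.range (LinearMap.funLeft ℂ ℂ π) := by
    intro f hf
    have hfac : ∀ x y, π x = π y → f x = f y := by
      intro x y hxy
      obtain ⟨c, rfl⟩ := isConj_iff.1 (hπ x y hxy)
      exact (hf x c).symm
    exact ⟨Function.extend π f 0, funext fun x =>
      Function.FactorsThrough.extend_apply (fun {a b} h => hfac a b h) 0 x⟩
  have hle : Submodule.span ℂ (Set.range χ) ≤ LinearMap.range (LinearMap.funLeft ℂ ℂ π) := by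
    rw [Submodule.span_le]
    rintro _ ⟨i, rfl⟩
    exact hmem _ fun g h => (hχ i).map_conj g h
  have hspan : Submodule.span ℂ (Set.range χ) = LinearMap.range (LinearMap.funLeft ℂ ℂ π) := by
    refine Submodule.eq_of_le_of_finrank_le hle ?_
    rw [finrank_span_eq_card (linearIndependent_of_isIrrChar hχ hinj)]
    exact (LinearMap.finrank_range_le _).trans (by simpa using hcard)
  obtain ⟨a, rfl⟩ := (Submodule.mem_span_range_iff_exists_fun ℂ).1 (hspan ▸ hmem f hf)
  simp_rw [charPairing_sum_smul_of_isIrrChar hχ hinj]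

lemma mem_range_of_isIrrChar {ι P : Type*} [Fintype ι] [Fintype P] {χ : ι → G → ℂ}
    (hχ : ∀ i, IsIrrChar G (χ i)) (hinj : Function.Injective χ)
    {π : G → P} (hπ : ∀ x y, π x = π y → IsConj x y) (hcard : Fintype.card P ≤ Fintype.card ι)
    {f : G → ℂ} (hf : IsIrrChar G f) : f ∈ Set.range χ := by
  by_contra hne
  have h0 : ∀ i, charPairing f (χ i) = 0 := fun i => by
    rw [hf.charPairing_eq (hχ i), if_neg fun h => hne ⟨i, h.symm⟩]
  have := eq_sum_charPairing_smul hχ hinj hπ hcard fun g h => hf.map_conj g h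
  simp only [h0, zero_smul, Finset.sum_const_zero] at this
  have h1 := hf.charPairing_eq hf
  rw [this] at h1
  simp [charPairing] at h1

end Characters
/-- A tableau of shape `μ` on `Ω`: a bijection from `Ω` to the cells of `μ`, given by the row and
the column of every element. -/
structure Tableau (Ω : Type*) (μ : YoungDiagram) where
  /-- the row of an element -/
  row : Ω → ℕ
  /-- the column of an element -/
  col : Ω → ℕ
  eq_of_row_eq_of_col_eq : ∀ x y, row x = row y → col x = col y → x = y
  mem_shape : ∀ x, (row x, col x) ∈ μ
  exists_of_mem : ∀ i j, (i, j) ∈ μ → ∃ x, row x = i ∧ col x = j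

namespace YoungDiagram

/-- The sum of the row indices of the cells. -/
def rowSum (μ : YoungDiagram) : ℕ := ∑ p ∈ μ.cells, p.1

/-- The diagram whose rows are twice as long as those of `μ`. -/
def double (μ : YoungDiagram) : YoungDiagram where
  cells := (μ.cells ×ˢ ({0, 1} : Finset ℕ)).image fun q => (q.1.1, 2 * q.1.2 + q.2)
  isLowerSet := by
    rintro ⟨i, j⟩ ⟨i', j'⟩ ⟨hi, hj⟩ h
    simp only [Finset.coe_image, Set.mem_image, Finset.mem_coe, Finset.mem_product, mem_cells,
      Prod.exists, Prod.mk.injEq] at h ⊢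
    obtain ⟨a, b, e, ⟨hab, he⟩, rfl, rfl⟩ := h
    refine ⟨i', j' / 2, j' % 2, ⟨μ.up_left_mem hi ?_ hab, ?_⟩, rfl, by omega⟩
    · simp at he hj
      omega
    · simp
      omega

lemma mem_double {μ : YoungDiagram} {i j : ℕ} : (i, j) ∈ μ.double ↔ (i, j / 2) ∈ μ := by
  rw [← mem_cells, double]
  simp only [Finset.mem_image, Finset.mem_product, mem_cells, Prod.exists, Prod.mk.injEq]
  constructor
  · rintro ⟨a, b, e, ⟨hab, he⟩, rfl, rfl⟩
    simp at he
    rwa [show (2 * b + e) / 2 = b by omega]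
  · intro h
    refine ⟨i, j / 2, j % 2, ⟨h, ?_⟩, rfl, by omega⟩
    simp
    omega

lemma double_injective : Function.Injective double := by
  intro μ ν h
  ext ⟨i, j⟩
  have h1 := mem_double (μ := μ) (i := i) (j := 2 * j)
  rw [h, mem_double, Nat.mul_div_cancel_left _ two_pos] at h1
  simpa using h1.symm

lemma sum_sub_colLen_add_card_sdiff_le {μ : YoungDiagram} (s : Finset (ℕ × ℕ)) :
    (∑ p ∈ μ.cells, ((p.1 : ℤ) - μ.colLen p.2)) + (μ.cells \ s).card ≤
      ∑ p ∈ s, ((p.1 : ℤ) - μ.colLen p.2) := by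
  rw [← Finset.sum_sdiff (Finset.inter_subset_left : μ.cells ∩ s ⊆ μ.cells),
    ← Finset.sum_sdiff (Finset.inter_subset_right : μ.cells ∩ s ⊆ s)]
  have h1 : 0 ≤ ∑ p ∈ s \ (μ.cells ∩ s), ((p.1 : ℤ) - μ.colLen p.2) := by
    refine Finset.sum_nonneg fun p hp => ?_
    have : p ∉ μ := by simp at hp; tauto
    have : ¬ p.1 < μ.colLen p.2 := fun h => this (mem_iff_lt_colLen.2 h)
    omega
  have h2 : ∑ p ∈ μ.cells \ (μ.cells ∩ s), ((p.1 : ℤ) - μ.colLen p.2) ≤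
      ∑ p ∈ μ.cells \ (μ.cells ∩ s), (-1) := by
    refine Finset.sum_le_sum fun p hp => ?_
    have : p ∈ μ := by simp at hp; tauto
    have : p.1 < μ.colLen p.2 := mem_iff_lt_colLen.1 this
    omega
  simp only [Finset.sum_const, Finset.sdiff_inter_self_left, smul_neg, nsmul_eq_mul,
    mul_one] at h1 h2 ⊢
  omega

end YoungDiagram

namespace Tableau

open Equiv

variable {Ω : Type*} [Fintype Ω] {μ ν : YoungDiagram}

section

variable (T : Tableau Ω μ)

lemma image_univ : Finset.univ.image (fun x => (T.row x, T.col x)) = μ.cells := by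
  ext ⟨i, j⟩
  simp only [Finset.mem_image, Finset.mem_univ, true_and, Prod.mk.injEq, YoungDiagram.mem_cells]
  exact ⟨by rintro ⟨x, rfl, rfl⟩; exact T.mem_shape x, T.exists_of_mem i j⟩

omit [Fintype Ω] in
lemma injective : Function.Injective fun x => (T.row x, T.col x) := fun x y h =>
  T.eq_of_row_eq_of_col_eq x y (Prod.mk.inj h).1 (Prod.mk.inj h).2

lemma sum_cells {M : Type*} [AddCommMonoid M] (f : ℕ × ℕ → M) :
    ∑ p ∈ μ.cells, f p = ∑ x, f (T.row x, T.col x) := by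
  rw [← T.image_univ, Finset.sum_image T.injective.injOn]

lemma sum_row : ∑ x, T.row x = μ.rowSum := (T.sum_cells Prod.fst).symm

include T in
lemma card_shape : μ.card = Fintype.card Ω := by
  rw [YoungDiagram.card, ← T.image_univ, Finset.card_image_of_injective _ T.injective,
    Finset.card_univ]

lemma rowLen_eq_card (i : ℕ) : μ.rowLen i = {x | T.row x = i}.ncard := by
  rw [YoungDiagram.rowLen_eq_card, YoungDiagram.row, ← T.image_univ, Finset.filter_image,
    Finset.card_image_of_injective _ T.injective, ← Set.ncard_coe_finset]
  simp

lemma rowSum_add_card_sdiff_le {r : Ω → ℕ} (hr : ∀ x y, r x = r y → T.col x = T.col y → x = y) :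
    μ.rowSum + (μ.cells \ Finset.univ.image fun x => (r x, T.col x)).card ≤ ∑ x, r x := by
  have hinj : Function.Injective fun x => (r x, T.col x) := fun x y h =>
    hr x y (Prod.mk.inj h).1 (Prod.mk.inj h).2
  have := YoungDiagram.sum_sub_colLen_add_card_sdiff_le (μ := μ)
    (Finset.univ.image fun x => (r x, T.col x))
  rw [Finset.sum_image hinj.injOn, T.sum_cells, Finset.sum_sub_distrib, Finset.sum_sub_distrib]
    at this
  have h2 := T.sum_row
  push_cast [← @Nat.cast_le ℤ, ← h2]
  linarith

lemma image_eq_of_sum_eq {r : Ω → ℕ} (hr : ∀ x y, r x = r y → T.col x = T.col y → x = y)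
    (hsum : ∑ x, r x = μ.rowSum) :
    (Finset.univ.image fun x => (r x, T.col x)) = μ.cells := by
  have hinj : Function.Injective fun x => (r x, T.col x) := fun x y h =>
    hr x y (Prod.mk.inj h).1 (Prod.mk.inj h).2
  have := T.rowSum_add_card_sdiff_le hr
  have h0 : (μ.cells \ Finset.univ.image fun x => (r x, T.col x)) = ∅ := by
    rw [← Finset.card_eq_zero]; omega
  symm
  refine Finset.eq_of_subset_of_card_le (Finset.sdiff_eq_empty_iff_subset.1 h0) ?_
  rw [Finset.card_image_of_injective _ hinj, Finset.card_univ, ← T.card_shape]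

/-- A permutation sending no two elements of a column to the same row factors as a row-preserving
permutation times a column-preserving one. -/
lemma exists_perm_of_row_col_injective {g : Perm Ω}
    (hg : ∀ x y, T.row (g x) = T.row (g y) → T.col x = T.col y → x = y) :
    ∃ k : Perm Ω, (∀ x, T.col (k x) = T.col x) ∧ ∀ x, T.row (g (k⁻¹ x)) = T.row x := by
  have himg := T.image_eq_of_sum_eq hg (by rw [Equiv.sum_comp g T.row, T.sum_row])
  have hex : ∀ x, ∃ y, T.row y = T.row (g x) ∧ T.col y = T.col x := fun x => by
    refine T.exists_of_mem _ _ ?_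
    rw [← YoungDiagram.mem_cells, ← himg]
    exact Finset.mem_image_of_mem _ (Finset.mem_univ x)
  choose k hk1 hk2 using hex
  have hinj : Function.Injective k := fun x y h =>
    hg x y (by rw [← hk1, ← hk1, h]) (by rw [← hk2 x, ← hk2 y, h])
  refine ⟨Equiv.ofBijective k (Finite.injective_iff_bijective.1 hinj), hk2, fun x => ?_⟩
  obtain ⟨y, rfl⟩ := (Equiv.ofBijective k (Finite.injective_iff_bijective.1 hinj)).surjective x
  rw [Perm.inv_def, symm_apply_apply, ← hk1]
  rfl

lemma rowSum_le (T' : Tableau Ω ν) {g : Perm Ω}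
    (hg : ∀ x y, T'.row (g x) = T'.row (g y) → T.col x = T.col y → x = y) :
    μ.rowSum ≤ ν.rowSum := by
  have := T.rowSum_add_card_sdiff_le hg
  rw [Equiv.sum_comp g T'.row, T'.sum_row] at this
  omega

lemma shape_eq (T' : Tableau Ω ν) {g : Perm Ω}
    (hg : ∀ x y, T'.row (g x) = T'.row (g y) → T.col x = T.col y → x = y)
    (h : μ.rowSum = ν.rowSum) : μ = ν := by
  have himg := T.image_eq_of_sum_eq hg (by rw [Equiv.sum_comp g T'.row, T'.sum_row, h])
  let U : Tableau Ω μ :=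
    { row := fun x => T'.row (g x)
      col := T.col
      eq_of_row_eq_of_col_eq := hg
      mem_shape := fun x => by
        rw [← YoungDiagram.mem_cells, ← himg]
        exact Finset.mem_image_of_mem _ (Finset.mem_univ x)
      exists_of_mem := fun i j hij => by
        rw [← YoungDiagram.mem_cells, ← himg] at hij
        simpa using hij }
  ext ⟨i, j⟩
  rw [YoungDiagram.mem_cells, YoungDiagram.mem_cells, YoungDiagram.mem_iff_lt_rowLen,
    YoungDiagram.mem_iff_lt_rowLen, U.rowLen_eq_card, T'.rowLen_eq_card,
    ← Set.ncard_image_of_injective _ g.injective]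
  suffices h : g '' {x | U.row x = i} = {x | T'.row x = i} by rw [h]
  ext x
  simp only [Set.mem_image, Set.mem_ofPred_eq]
  exact ⟨by rintro ⟨y, hy, rfl⟩; exact hy, fun hx => ⟨g⁻¹ x, by simpa [U] using hx, by simp⟩⟩

end

omit [Fintype Ω] in
/-- Two copies of a tableau side by side, with columns interleaved. -/
def double (T : Tableau Ω μ) : Tableau (Ω ⊕ Ω) μ.double where
  row := Sum.elim T.row T.row
  col := Sum.elim (fun x => 2 * T.col x) fun x => 2 * T.col x + 1
  eq_of_row_eq_of_col_eq := by
    rintro (x | x) (y | y) h1 h2 <;> simp only [Sum.elim_inl, Sum.elim_inr] at h1 h2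
    · rw [T.eq_of_row_eq_of_col_eq x y h1 (by omega)]
    · omega
    · omega
    · rw [T.eq_of_row_eq_of_col_eq x y h1 (by omega)]
  mem_shape := by
    rintro (x | x)
    · simpa [YoungDiagram.mem_double] using T.mem_shape x
    · simpa [YoungDiagram.mem_double, Nat.mul_add_div] using T.mem_shape x
  exists_of_mem := by
    intro i j h
    obtain ⟨x, rfl, hx⟩ := T.exists_of_mem _ _ (YoungDiagram.mem_double.1 h)
    obtain hj | hj := Nat.mod_two_eq_zero_or_one j
    · exact ⟨Sum.inl x, rfl, by simp only [Sum.elim_inl]; omega⟩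
    · exact ⟨Sum.inr x, rfl, by simp only [Sum.elim_inr]; omega⟩

omit [Fintype Ω] in
lemma exists_tableau [Fintype Ω] (h : μ.card = Fintype.card Ω) : Nonempty (Tableau Ω μ) := by
  have e : Ω ≃ μ.cells := Fintype.equivOfCardEq (by simp [← h])
  exact ⟨
    { row := fun x => (e x).1.1
      col := fun x => (e x).1.2
      eq_of_row_eq_of_col_eq := fun x y h1 h2 => e.injective (Subtype.ext (Prod.ext h1 h2))
      mem_shape := fun x => (e x).2
      exists_of_mem := fun i j hij => ⟨e.symm ⟨(i, j), hij⟩, by simp⟩ }⟩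

end Tableau

section Cyclic

variable {G V W : Type*} [Group G] [AddCommGroup V] [Module ℂ V] [AddCommGroup W] [Module ℂ W]

/-- The subrepresentation generated by a vector. -/
def cyclicSubrep (ρ : Representation ℂ G V) (v : V) : Subrepresentation ρ where
  toSubmodule := Submodule.span ℂ (Set.range fun g => ρ g v)
  apply_mem_toSubmodule g w hw := by
    have hle : Submodule.span ℂ (Set.range fun g => ρ g v) ≤
        (Submodule.span ℂ (Set.range fun g => ρ g v)).comap (ρ g) := by
      rw [Submodule.span_le]
      rintro _ ⟨h, rfl⟩
      refine Submodule.subset_span ⟨g * h, ?_⟩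
      simp
    exact hle hw

lemma mem_cyclicSubrep_self (ρ : Representation ℂ G V) (v : V) :
    v ∈ (cyclicSubrep ρ v).toSubmodule := Submodule.subset_span ⟨1, by simp⟩

/-- The generator of the subrepresentation generated by a vector. -/
def cyclicGenerator (ρ : Representation ℂ G V) (v : V) : (cyclicSubrep ρ v).toSubmodule :=
  ⟨v, mem_cyclicSubrep_self ρ v⟩

lemma span_orbit_cyclicGenerator (ρ : Representation ℂ G V) (v : V) :
    Submodule.span ℂ (Set.range fun g =>
      (cyclicSubrep ρ v).toRepresentation g (cyclicGenerator ρ v)) = ⊤ := by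
  apply Submodule.map_injective_of_injective (cyclicSubrep ρ v).toSubmodule.injective_subtype
  rw [Submodule.map_span, Submodule.map_top, Submodule.range_subtype, ← Set.range_comp]
  rfl

lemma Representation.IntertwiningMap.ext_of_span_orbit {ρ : Representation ℂ G V}
    {σ : Representation ℂ G W} {v : V}
    (hv : Submodule.span ℂ (Set.range fun g => ρ g v) = ⊤) {f f' : IntertwiningMap ρ σ}
    (h : f v = f' v) : f = f' := by
  apply IntertwiningMap.ext
  refine LinearMap.ext_on_range hv fun g => ?_
  rw [IntertwiningMap.toLinearMap_apply, IntertwiningMap.toLinearMap_apply,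
    IntertwiningMap.isIntertwining, IntertwiningMap.isIntertwining, h]

lemma finrank_intertwiningMap_eq_one {ρ : Representation ℂ G V} {σ : Representation ℂ G W}
    {f₀ : IntertwiningMap ρ σ} (h₀ : f₀ ≠ 0) (h : ∀ f : IntertwiningMap ρ σ, ∃ c : ℂ, c • f₀ = f) :
    Module.finrank ℂ (IntertwiningMap ρ σ) = 1 := by
  rw [← (invariantsEquivIntertwiningMap ρ σ).finrank_eq]
  refine finrank_eq_one_iff'.2 ⟨(invariantsEquivIntertwiningMap ρ σ).symm f₀, by simpa, fun v => ?_⟩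
  obtain ⟨c, hc⟩ := h (invariantsEquivIntertwiningMap ρ σ v)
  exact ⟨c, by rw [← map_smul, hc, LinearEquiv.symm_apply_apply]⟩

lemma exists_intertwiningMap_ne_zero {ρ : Representation ℂ G V} {σ : Representation ℂ G W}
    (h : Module.finrank ℂ (IntertwiningMap ρ σ) ≠ 0) : ∃ f : IntertwiningMap ρ σ, f ≠ 0 := by
  by_contra! hall
  have : Subsingleton (IntertwiningMap ρ σ) := ⟨fun f f' => by rw [hall f, hall f']⟩
  exact h (Module.finrank_zero_of_subsingleton)

variable (G) in
/-- The representation of `G` on the functions on `G` by right translation. -/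
def rightRegular : Representation ℂ G (G → ℂ) where
  toFun g := LinearMap.funLeft ℂ ℂ fun x => x * g
  map_one' := by ext; simp [LinearMap.funLeft]
  map_mul' a b := by ext; simp [LinearMap.funLeft, mul_assoc]

@[simp]
lemma rightRegular_apply (g : G) (f : G → ℂ) (x : G) : rightRegular G g f x = f (x * g) := rfl

/-- Two representations mapping to a common one with intersecting images have a nonzero
intertwining map between them. -/
lemma exists_intertwiningMap_apply_ne_zero [Fintype G] {X : Type*} [AddCommGroup X] [Module ℂ X]
    {ρ : Representation ℂ G V} {σ : Representation ℂ G W} {τ : Representation ℂ G X}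
    (α : IntertwiningMap ρ τ) (β : IntertwiningMap σ τ) {a : V} {b : W} (h : α a = β b)
    (hne : β b ≠ 0) : ∃ f : IntertwiningMap ρ σ, f a ≠ 0 := by
  obtain ⟨s, hs⟩ := LinearMap.exists_rightInverse_of_surjective β.toLinearMap.rangeRestrict
    (LinearMap.range_rangeRestrict _)
  obtain ⟨θ, hθ⟩ := LinearMap.exists_extend s
  have hθβ : ∀ w, β (θ (β w)) = β w := fun w => by
    have h1 := LinearMap.congr_fun hθ ⟨β w, w, rfl⟩
    have h2 := congr_arg Subtype.val (LinearMap.congr_fun hs ⟨β w, w, rfl⟩)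
    simp only [LinearMap.comp_apply, Submodule.subtype_apply] at h1
    rw [h1]
    exact h2
  let Θ : X →ₗ[ℂ] W := (Fintype.card G : ℂ)⁻¹ • ∑ g : G, σ g ∘ₗ θ ∘ₗ τ g⁻¹
  have hΘ : ∀ x, Θ x = (Fintype.card G : ℂ)⁻¹ • ∑ g : G, σ g (θ (τ g⁻¹ x)) := fun x => by
    simp [Θ, LinearMap.sum_apply]
  have hint : ∀ g x, Θ (τ g x) = σ g (Θ x) := fun g x => by
    rw [hΘ, hΘ, map_smul, map_sum, ← Equiv.sum_comp (Equiv.mulLeft g)]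
    congr 1
    refine Finset.sum_congr rfl fun k _ => ?_
    rw [← Module.End.mul_apply, ← Module.End.mul_apply, ← map_mul, ← map_mul]
    simp [mul_assoc]
  have hβΘ : β (Θ (β b)) = β b := by
    rw [hΘ, map_smul, map_sum]
    have : ∀ g : G, β (σ g (θ (τ g⁻¹ (β b)))) = β b := fun g => by
      rw [IntertwiningMap.isIntertwining, ← IntertwiningMap.isIntertwining _ _ β g⁻¹, hθβ,
        ← IntertwiningMap.isIntertwining, ← Module.End.mul_apply, ← map_mul]
      simp
    rw [Finset.sum_congr rfl fun g _ => this g, Finset.sum_const, Finset.card_univ,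
      ← Nat.cast_smul_eq_nsmul ℂ, smul_smul, inv_mul_cancel₀ (by simp), one_smul]
  refine ⟨(Θ.intertwiningMap_of_isIntertwiningMap _ _ hint).comp α, fun h0 => hne ?_⟩
  rw [← hβΘ, ← h]
  have : Θ (α a) = 0 := h0
  rw [this, map_zero]

end Cyclic

namespace Tableau

open Equiv

variable {Ω : Type} [Fintype Ω] [DecidableEq Ω] {μ ν : YoungDiagram} (T : Tableau Ω μ)

omit [Fintype Ω] [DecidableEq Ω] in
/-- Invariance under left translation by row-preserving permutations. -/
def IsRowInvariant (f : Perm Ω → ℂ) : Prop :=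
  ∀ h x : Perm Ω, (∀ a, T.row (h a) = T.row a) → f (h * x) = f x

/-- Right translation by a column-preserving permutation acts by its sign. -/
def IsColAlternating (f : Perm Ω → ℂ) : Prop :=
  ∀ k x : Perm Ω, (∀ a, T.col (k a) = T.col a) → f (x * k) = (Perm.sign k : ℤ) * f x

/-- The function sending a row-preserving permutation times a column-preserving one to the sign of
the latter, and vanishing on the other permutations. -/
noncomputable def symmetrizer (x : Perm Ω) : ℂ :=
  ∑ k : Perm Ω, if (∀ a, T.col (k a) = T.col a) ∧ ∀ a, T.row (x (k⁻¹ a)) = T.row a then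
    ((Perm.sign k : ℤ) : ℂ) else 0

lemma isRowInvariant_symmetrizer : T.IsRowInvariant T.symmetrizer := by
  intro h x hh
  simp [symmetrizer, hh]

lemma isColAlternating_symmetrizer : T.IsColAlternating T.symmetrizer := by
  intro k x hk
  rw [symmetrizer, symmetrizer, ← Equiv.sum_comp (Equiv.mulRight k), Finset.mul_sum]
  refine Finset.sum_congr rfl fun k' _ => ?_
  have h1 : (∀ a, T.col ((k' * k) a) = T.col a) ↔ ∀ a, T.col (k' a) = T.col a :=
    ⟨fun h a => by simpa [hk] using (h (k⁻¹ a)).trans (hk (k⁻¹ a)).symm,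
      fun h a => by rw [Perm.mul_apply, h, hk]⟩
  simp only [coe_mulRight, h1, mul_ite, mul_zero]
  simp [mul_comm]

lemma symmetrizer_one : T.symmetrizer 1 = 1 := by
  rw [symmetrizer, Finset.sum_eq_single 1]
  · simp
  · rintro k - hk
    rw [if_neg]
    rintro ⟨h1, h2⟩
    refine hk (Equiv.ext fun a => T.eq_of_row_eq_of_col_eq _ _ ?_ (h1 a))
    simpa using (h2 (k a)).symm
  · simp

variable {T} in
lemma IsRowInvariant.injective_of_ne_zero {f : Perm Ω → ℂ} (hf : T.IsRowInvariant f)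
    {T' : Tableau Ω ν} (hf' : T'.IsColAlternating f) {g : Perm Ω} (hg : f g ≠ 0) (x y : Ω)
    (hr : T.row (g x) = T.row (g y)) (hc : T'.col x = T'.col y) : x = y := by
  by_contra hne
  have h1 := hf' (swap x y) g fun a => by
    rw [swap_apply_def]; split_ifs with h h <;> simp [h, hc]
  have h2 := hf (swap (g x) (g y)) g fun a => by
    rw [swap_apply_def]; split_ifs with h h <;> simp [h, hr]
  rw [mul_swap_eq_swap_mul, h2, Perm.sign_swap hne] at h1
  refine hg ?_
  simp only [Units.val_neg, Units.val_one, Int.cast_neg, Int.cast_one] at h1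
  linear_combination h1 / 2

variable {T} in
lemma IsRowInvariant.eq_smul_symmetrizer {f : Perm Ω → ℂ} (hf : T.IsRowInvariant f)
    (hf' : T.IsColAlternating f) : f = f 1 • T.symmetrizer := by
  have key : ∀ f' : Perm Ω → ℂ, T.IsRowInvariant f' → T.IsColAlternating f' → f' 1 = 0 →
      f' = 0 := by
    intro f' h1 h2 h0
    by_contra hne
    obtain ⟨g, hg⟩ := Function.ne_iff.1 hne
    obtain ⟨k, hk1, hk2⟩ := T.exists_perm_of_row_col_injective (h1.injective_of_ne_zero h2 hg)
    refine hg ?_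
    have e1 := h2 k 1 hk1
    have e2 := h1 (g * k⁻¹) (1 * k) hk2
    rw [e1, h0, mul_zero] at e2
    simpa using e2
  rw [← sub_eq_zero]
  refine key _ (fun h x hh => ?_) (fun k x hk => ?_) ?_
  · simp [hf h x hh, T.isRowInvariant_symmetrizer h x hh]
  · simp [hf' k x hk, T.isColAlternating_symmetrizer k x hk]
    ring
  · simp [symmetrizer_one]

/-- The Specht module of a tableau, inside the functions on the symmetric group. -/
noncomputable def specht : Subrepresentation (rightRegular (Perm Ω)) :=
  cyclicSubrep _ T.symmetrizer

/-- The character of the Specht module of a tableau. -/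
noncomputable def spechtChar : Perm Ω → ℂ := T.specht.toRepresentation.character

/-- The generator of the Specht module. -/
noncomputable def spechtGen : T.specht.toSubmodule := cyclicGenerator _ T.symmetrizer

@[simp]
lemma coe_spechtGen : (T.spechtGen : Perm Ω → ℂ) = T.symmetrizer := rfl

lemma isRowInvariant_of_mem_specht {f : Perm Ω → ℂ} (hf : f ∈ T.specht.toSubmodule) :
    T.IsRowInvariant f := by
  intro h x hh
  induction hf using Submodule.span_induction with
  | mem f hf =>
    obtain ⟨g, rfl⟩ := hf
    simp only [rightRegular_apply]
    rw [mul_assoc, T.isRowInvariant_symmetrizer _ _ hh]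
  | zero => rfl
  | add f f' _ _ h1 h2 => rw [Pi.add_apply, Pi.add_apply, h1, h2]
  | smul c f _ h1 => rw [Pi.smul_apply, Pi.smul_apply, h1]

lemma apply_spechtGen {k : Perm Ω} (hk : ∀ a, T.col (k a) = T.col a) :
    T.specht.toRepresentation k T.spechtGen = ((Perm.sign k : ℤ) : ℂ) • T.spechtGen :=
  Subtype.ext (funext fun x => T.isColAlternating_symmetrizer k x hk)

lemma isColAlternating_intertwiningMap_spechtGen {T' : Tableau Ω ν}
    (f : IntertwiningMap T'.specht.toRepresentation T.specht.toRepresentation) :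
    T'.IsColAlternating (f T'.spechtGen : Perm Ω → ℂ) := by
  intro k x hk
  have := IntertwiningMap.isIntertwining _ _ f k T'.spechtGen
  rw [T'.apply_spechtGen hk, map_smul] at this
  exact (congr_fun (congr_arg Subtype.val this) x).symm

lemma spechtGen_ne_zero : T.spechtGen ≠ 0 := fun h => by
  have := congr_fun (congr_arg Subtype.val h) 1
  simp [symmetrizer_one] at this

lemma intertwiningMap_eq_zero {V : Type*} [AddCommGroup V] [Module ℂ V]
    {σ : Representation ℂ (Perm Ω) V} {f : IntertwiningMap T.specht.toRepresentation σ}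
    (h : f T.spechtGen = 0) : f = 0 :=
  IntertwiningMap.ext_of_span_orbit (span_orbit_cyclicGenerator _ T.symmetrizer) h

lemma isIrrChar_spechtChar : IsIrrChar (Perm Ω) T.spechtChar := by
  refine isIrrChar_of_finrank_eq_one _ (finrank_intertwiningMap_eq_one
    (f₀ := IntertwiningMap.id _)
    (fun h => T.spechtGen_ne_zero (DFunLike.congr_fun h T.spechtGen)) fun f => ?_)
  refine ⟨(f T.spechtGen : Perm Ω → ℂ) 1, ?_⟩
  refine IntertwiningMap.ext_of_span_orbit (span_orbit_cyclicGenerator _ T.symmetrizer) ?_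
  refine Subtype.ext (Eq.symm ?_)
  exact (T.isRowInvariant_of_mem_specht (f T.spechtGen).2).eq_smul_symmetrizer
    (T.isColAlternating_intertwiningMap_spechtGen f)

lemma exists_injective_of_spechtChar_eq {T' : Tableau Ω ν} (h : T.spechtChar = T'.spechtChar) :
    ∃ g : Perm Ω, ∀ x y, T.row (g x) = T.row (g y) → T'.col x = T'.col y → x = y := by
  have h1 := charPairing_eq_finrank T'.specht.toRepresentation T.specht.toRepresentation
  change charPairing T.spechtChar T'.spechtChar = _ at h1
  rw [T.isIrrChar_spechtChar.charPairing_eq T'.isIrrChar_spechtChar, if_pos h] at h1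
  obtain ⟨f, hf⟩ := exists_intertwiningMap_ne_zero (ρ := T'.specht.toRepresentation)
    (σ := T.specht.toRepresentation) (fun h0 => by simp [h0] at h1)
  have hne : (f T'.spechtGen : Perm Ω → ℂ) ≠ 0 := fun h0 =>
    hf (T'.intertwiningMap_eq_zero (Subtype.ext h0))
  obtain ⟨g, hg⟩ := Function.ne_iff.1 hne
  exact ⟨g, (T.isRowInvariant_of_mem_specht (f T'.spechtGen).2).injective_of_ne_zero
    (T.isColAlternating_intertwiningMap_spechtGen f) hg⟩

lemma shape_eq_of_spechtChar_eq {T' : Tableau Ω ν} (h : T.spechtChar = T'.spechtChar) :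
    μ = ν := by
  obtain ⟨g, hg⟩ := T.exists_injective_of_spechtChar_eq h
  obtain ⟨g', hg'⟩ := T'.exists_injective_of_spechtChar_eq h.symm
  exact T.shape_eq T' hg' ((T.rowSum_le T' hg').antisymm (T'.rowSum_le T hg))

end Tableau

section Frobenius

variable {G H : Type} [Group G] [Fintype G] [Group H] [Fintype H]

lemma charPairing_comm (f g : G → ℂ) : charPairing f g = charPairing g f := by
  rw [charPairing, charPairing, ← Equiv.sum_comp (Equiv.inv G)]
  simp [mul_comm]

lemma indHom_conj (φ : H →* G) (u : H → ℂ) (g k : G) :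
    indHom φ u (k * g * k⁻¹) = indHom φ u g := by
  rw [indHom, indHom, ← Equiv.sum_comp (Equiv.mulLeft k)]
  simp [mul_assoc]

/-- Frobenius reciprocity. -/
lemma charPairing_indHom (φ : H →* G) (u : H → ℂ) {f : G → ℂ}
    (hf : ∀ g h, f (h * g * h⁻¹) = f g) :
    charPairing (indHom φ u) f = charPairing u (f ∘ φ) := by
  simp only [charPairing, indHom, Finset.mul_sum, Finset.sum_mul]
  rw [Finset.sum_comm]
  have key : ∀ x : G, ∑ g : G, ∑ h : H, (Nat.card G : ℂ)⁻¹ *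
      ((Nat.card H : ℂ)⁻¹ * (if φ h = x⁻¹ * g * x then u h else 0) * f g⁻¹) =
      (Nat.card G : ℂ)⁻¹ * ∑ h : H, (Nat.card H : ℂ)⁻¹ * (u h * (f ∘ φ) h⁻¹) := by
    intro x
    rw [Finset.sum_comm, Finset.mul_sum]
    refine Finset.sum_congr rfl fun h _ => ?_
    rw [Finset.sum_eq_single (x * φ h * x⁻¹)]
    · have h1 : φ h = x⁻¹ * (x * φ h * x⁻¹) * x := by group
      have h2 : (x * φ h * x⁻¹)⁻¹ = x * φ h⁻¹ * x⁻¹ := by simp [mul_assoc]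
      rw [if_pos h1, h2, hf]
      simp only [Function.comp_apply]
      ring
    · intro g _ hg
      rw [if_neg, mul_zero, zero_mul, mul_zero]
      intro h'
      exact hg (by rw [h']; group)
    · simp
  rw [Finset.sum_congr rfl fun x _ => key x, Finset.sum_const, Finset.card_univ, nsmul_eq_mul,
    ← mul_assoc, Nat.card_eq_fintype_card, mul_inv_cancel₀ (by simp), one_mul]

end Frobenius

section OuterSquare

open scoped TensorProduct

variable {G : Type*} {V : Type} [Group G] [AddCommGroup V] [Module ℂ V]

variable (V) in
/-- The tensor square of a complex vector space. -/
def TensorSquare : Type := V ⊗[ℂ] V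

namespace TensorSquare

noncomputable instance : AddCommGroup (TensorSquare V) :=
  inferInstanceAs (AddCommGroup (V ⊗[ℂ] V))

noncomputable instance : Module ℂ (TensorSquare V) := inferInstanceAs (Module ℂ (V ⊗[ℂ] V))

instance [FiniteDimensional ℂ V] : FiniteDimensional ℂ (TensorSquare V) :=
  inferInstanceAs (FiniteDimensional ℂ (V ⊗[ℂ] V))

/-- The square of a vector in the tensor square. -/
def sq (v : V) : TensorSquare V := v ⊗ₜ[ℂ] v

end TensorSquare

/-- The outer tensor square of a representation of `G`, as a representation of `G × G`. -/
noncomputable def outerSquare (ρ : Representation ℂ G V) :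
    Representation ℂ (G × G) (TensorSquare V) :=
  tprod (MonoidHom.comp ρ (MonoidHom.fst G G)) (MonoidHom.comp ρ (MonoidHom.snd G G))

lemma outerSquare_sq {ρ : Representation ℂ G V} {p : G × G} {v : V} {a b : ℂ}
    (ha : ρ p.1 v = a • v) (hb : ρ p.2 v = b • v) :
    outerSquare ρ p (.sq v) = (a * b) • TensorSquare.sq v := by
  change ρ p.1 v ⊗ₜ[ℂ] ρ p.2 v = (a * b) • (v ⊗ₜ[ℂ] v)
  rw [ha, hb, TensorProduct.smul_tmul_smul]

lemma character_outerSquare [FiniteDimensional ℂ V] (ρ : Representation ℂ G V) :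
    (outerSquare ρ).character = fun p => ρ.character p.1 * ρ.character p.2 :=
  char_tensor _ _

lemma span_orbit_outerSquare {ρ : Representation ℂ G V} {v : V}
    (hv : Submodule.span ℂ (Set.range fun g => ρ g v) = ⊤) :
    Submodule.span ℂ (Set.range fun p => outerSquare ρ p (.sq v)) = ⊤ := by
  have h := Submodule.map₂_span_span ℂ (TensorProduct.mk ℂ V V) (Set.range fun g => ρ g v)
    (Set.range fun g => ρ g v)
  rw [hv, TensorProduct.map₂_mk_top_top_eq_top, Set.image2_range] at h
  exact h.symm

end OuterSquare

namespace Tableau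

open Equiv
open scoped TensorProduct

variable {Ω : Type} [Fintype Ω] [DecidableEq Ω] {μ ν : YoungDiagram} (T : Tableau Ω μ)

omit [Fintype Ω] [DecidableEq Ω] in
lemma double_col_sumCongr {k k' : Perm Ω} (hk : ∀ a, T.col (k a) = T.col a)
    (hk' : ∀ a, T.col (k' a) = T.col a) (a : Ω ⊕ Ω) :
    T.double.col (Perm.sumCongrHom Ω Ω (k, k') a) = T.double.col a := by
  rcases a with a | a <;> simp [double, hk, hk']

omit [Fintype Ω] [DecidableEq Ω] in
lemma double_row_sumCongr {k k' : Perm Ω} (hk : ∀ a, T.row (k a) = T.row a)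
    (hk' : ∀ a, T.row (k' a) = T.row a) (a : Ω ⊕ Ω) :
    T.double.row (Perm.sumCongrHom Ω Ω (k, k') a) = T.double.row a := by
  rcases a with a | a <;> simp [double, hk, hk']

omit [DecidableEq Ω] in
lemma exists_sumCongr_eq {k : Perm (Ω ⊕ Ω)} (hk : ∀ a, T.double.col (k a) = T.double.col a) :
    ∃ p : Perm Ω × Perm Ω, Perm.sumCongrHom Ω Ω p = k ∧ (∀ a, T.col (p.1 a) = T.col a) ∧
      ∀ a, T.col (p.2 a) = T.col a := by
  have hmaps : Set.MapsTo k (Set.range Sum.inl) (Set.range Sum.inl) := by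
    rintro _ ⟨x, rfl⟩
    have := hk (Sum.inl x)
    rcases hx : k (Sum.inl x) with y | y
    · exact ⟨y, rfl⟩
    · simp [hx, double] at this
      omega
  obtain ⟨p, rfl⟩ := Perm.mem_sumCongrHom_range_of_perm_mapsTo_inl hmaps
  refine ⟨p, rfl, fun a => ?_, fun a => ?_⟩
  · simpa [double] using hk (Sum.inl a)
  · simpa [double] using hk (Sum.inr a)

omit T in
lemma sign_sumCongrHom (k k' : Perm Ω) :
    Perm.sign (Perm.sumCongrHom Ω Ω (k, k')) = Perm.sign k * Perm.sign k' :=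
  Perm.sign_sumCongr k k'

lemma symmetrizer_double_sumCongr (p : Perm Ω × Perm Ω) :
    T.double.symmetrizer (Perm.sumCongrHom Ω Ω p) = T.symmetrizer p.1 * T.symmetrizer p.2 := by
  obtain ⟨g, g'⟩ := p
  have h1 : ∀ g', T.IsRowInvariant fun g => T.double.symmetrizer (Perm.sumCongrHom Ω Ω (g, g')) :=
    fun g' h x hh => by
      have := T.double.isRowInvariant_symmetrizer (Perm.sumCongrHom Ω Ω (h, 1))
        (Perm.sumCongrHom Ω Ω (x, g')) (T.double_row_sumCongr hh fun _ => rfl)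
      rwa [← map_mul, Prod.mk_mul_mk, one_mul] at this
  have h2 : ∀ g', T.IsColAlternating fun g =>
      T.double.symmetrizer (Perm.sumCongrHom Ω Ω (g, g')) := fun g' h x hh => by
    have := T.double.isColAlternating_symmetrizer (Perm.sumCongrHom Ω Ω (h, 1))
      (Perm.sumCongrHom Ω Ω (x, g')) (T.double_col_sumCongr hh fun _ => rfl)
    rw [← map_mul, Prod.mk_mul_mk, mul_one, sign_sumCongrHom] at this
    simpa using this
  have h3 : T.IsRowInvariant fun g' => T.double.symmetrizer (Perm.sumCongrHom Ω Ω (1, g')) :=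
    fun h x hh => by
      have := T.double.isRowInvariant_symmetrizer (Perm.sumCongrHom Ω Ω (1, h))
        (Perm.sumCongrHom Ω Ω (1, x)) (T.double_row_sumCongr (fun _ => rfl) hh)
      rwa [← map_mul, Prod.mk_mul_mk, one_mul] at this
  have h4 : T.IsColAlternating fun g' =>
      T.double.symmetrizer (Perm.sumCongrHom Ω Ω (1, g')) := fun h x hh => by
    have := T.double.isColAlternating_symmetrizer (Perm.sumCongrHom Ω Ω (1, h))
      (Perm.sumCongrHom Ω Ω (1, x)) (T.double_col_sumCongr (fun _ => rfl) hh)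
    rw [← map_mul, Prod.mk_mul_mk, mul_one, sign_sumCongrHom] at this
    simpa using this
  have e1 := congr_fun ((h1 g').eq_smul_symmetrizer (h2 g')) g
  have e2 := congr_fun (h3.eq_smul_symmetrizer h4) g'
  simp only [Pi.smul_apply, smul_eq_mul] at e1 e2
  rw [e1, e2, ← Prod.one_eq_mk, map_one, symmetrizer_one, one_mul, mul_comm]

/-- The restriction to `S_Ω × S_Ω` of the Specht module of a tableau on `Ω ⊕ Ω`. -/
noncomputable abbrev spechtRes (T' : Tableau (Ω ⊕ Ω) ν) :
    Representation ℂ (Perm Ω × Perm Ω) T'.specht.toSubmodule :=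
  MonoidHom.comp T'.specht.toRepresentation (Perm.sumCongrHom Ω Ω)

/-- The character of `S_{Ω ⊕ Ω}` induced from the outer square of the Specht character. -/
noncomputable def indSquare : Perm (Ω ⊕ Ω) → ℂ :=
  indHom (Perm.sumCongrHom Ω Ω) fun p => T.spechtChar p.1 * T.spechtChar p.2

lemma charPairing_indSquare (T' : Tableau (Ω ⊕ Ω) ν) :
    charPairing T.indSquare T'.spechtChar = Module.finrank ℂ
      (IntertwiningMap (outerSquare T.specht.toRepresentation) T'.spechtRes) := by
  rw [indSquare, charPairing_indHom _ _ fun g h => T'.isIrrChar_spechtChar.map_conj g h,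
    ← charPairing_eq_finrank, character_outerSquare, charPairing_comm]
  rfl

variable {T} in
lemma isColAlternating_intertwiningMap_outerSquare {T' : Tableau (Ω ⊕ Ω) ν}
    (f : IntertwiningMap (outerSquare T.specht.toRepresentation) T'.spechtRes) :
    T.double.IsColAlternating (f (.sq T.spechtGen) : Perm (Ω ⊕ Ω) → ℂ) := by
  intro k x hk
  obtain ⟨⟨k1, k2⟩, rfl, hk1, hk2⟩ := T.exists_sumCongr_eq hk
  have := IntertwiningMap.isIntertwining _ _ f (k1, k2) (.sq T.spechtGen)
  rw [outerSquare_sq (T.apply_spechtGen hk1) (T.apply_spechtGen hk2), map_smul] at this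
  rw [sign_sumCongrHom, Units.val_mul, Int.cast_mul]
  exact (congr_fun (congr_arg Subtype.val this) x).symm

variable {T} in
lemma intertwiningMap_outerSquare_ext {T' : Tableau (Ω ⊕ Ω) ν}
    {f f' : IntertwiningMap (outerSquare T.specht.toRepresentation) T'.spechtRes}
    (h : f (.sq T.spechtGen) = f' (.sq T.spechtGen)) : f = f' := by
  have hspan : Submodule.span ℂ (Set.range fun g => T.specht.toRepresentation g T.spechtGen) = ⊤ :=
    span_orbit_cyclicGenerator _ T.symmetrizer
  have hspan' := span_orbit_outerSquare (ρ := T.specht.toRepresentation) (v := T.spechtGen) hspan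
  exact IntertwiningMap.ext_of_span_orbit hspan' h

lemma exists_injective_of_charPairing_indSquare_ne_zero {T' : Tableau (Ω ⊕ Ω) ν}
    (h : charPairing T.indSquare T'.spechtChar ≠ 0) :
    ∃ g : Perm (Ω ⊕ Ω), ∀ x y, T'.row (g x) = T'.row (g y) → T.double.col x = T.double.col y →
      x = y := by
  rw [charPairing_indSquare, Nat.cast_ne_zero] at h
  obtain ⟨f, hf⟩ := exists_intertwiningMap_ne_zero h
  have hne : (f (.sq T.spechtGen) : Perm (Ω ⊕ Ω) → ℂ) ≠ 0 := fun h0 =>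
    hf (intertwiningMap_outerSquare_ext (Subtype.ext h0))
  obtain ⟨g, hg⟩ := Function.ne_iff.1 hne
  exact ⟨g, (T'.isRowInvariant_of_mem_specht (f _).2).injective_of_ne_zero
    (isColAlternating_intertwiningMap_outerSquare f) hg⟩

lemma exists_intertwiningMap_outerSquare_double :
    ∃ f : IntertwiningMap (outerSquare T.specht.toRepresentation) T.double.spechtRes,
      f (.sq T.spechtGen) ≠ 0 := by
  let α₀ : T.specht.toSubmodule ⊗[ℂ] T.specht.toSubmodule →ₗ[ℂ] (Perm Ω × Perm Ω → ℂ) :=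
    TensorProduct.lift (LinearMap.mk₂ ℂ
      (fun v v' p => (v : Perm Ω → ℂ) p.1 * (v' : Perm Ω → ℂ) p.2)
      (fun _ _ _ => funext fun _ => add_mul _ _ _)
      (fun _ _ _ => funext fun _ => mul_assoc _ _ _)
      (fun _ _ _ => funext fun _ => mul_add _ _ _)
      (fun _ _ _ => funext fun _ => mul_left_comm _ _ _))
  let α : IntertwiningMap (outerSquare T.specht.toRepresentation) (rightRegular _) :=
    { toLinearMap := α₀, isIntertwining' := fun g => TensorProduct.ext' fun v v' => rfl }
  let β : IntertwiningMap T.double.spechtRes (rightRegular _) :=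
    { LinearMap.funLeft ℂ ℂ (Perm.sumCongrHom Ω Ω) ∘ₗ T.double.specht.toSubmodule.subtype with
      isIntertwining' := fun g => LinearMap.ext fun v => funext fun x =>
        congr_arg (v : Perm (Ω ⊕ Ω) → ℂ) (map_mul (Perm.sumCongrHom Ω Ω) x g).symm }
  have hβ : ∀ p, β T.double.spechtGen p = T.double.symmetrizer (Perm.sumCongrHom Ω Ω p) :=
    fun p => rfl
  refine exists_intertwiningMap_apply_ne_zero α β (b := T.double.spechtGen)
    (funext fun p => ?_) fun h => ?_
  · rw [hβ, symmetrizer_double_sumCongr]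
    rfl
  · have := hβ 1
    rw [h, map_one, symmetrizer_one] at this
    simp at this

lemma charPairing_indSquare_double : charPairing T.indSquare T.double.spechtChar = 1 := by
  obtain ⟨f₀, h₀⟩ := T.exists_intertwiningMap_outerSquare_double
  have key : ∀ f : IntertwiningMap (outerSquare T.specht.toRepresentation) T.double.spechtRes,
      f (.sq T.spechtGen) =
        (f (.sq T.spechtGen) : Perm (Ω ⊕ Ω) → ℂ) 1 • T.double.spechtGen := fun f =>
    Subtype.ext ((T.double.isRowInvariant_of_mem_specht (f _).2).eq_smul_symmetrizer
      (isColAlternating_intertwiningMap_outerSquare f))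
  have hc : (f₀ (.sq T.spechtGen) : Perm (Ω ⊕ Ω) → ℂ) 1 ≠ 0 := fun h => by
    rw [key f₀, h, zero_smul] at h₀
    exact h₀ rfl
  rw [charPairing_indSquare, finrank_intertwiningMap_eq_one (f₀ := f₀), Nat.cast_one]
  · rintro rfl
    exact h₀ rfl
  · intro f
    refine ⟨(f (.sq T.spechtGen) : Perm (Ω ⊕ Ω) → ℂ) 1 *
      ((f₀ (.sq T.spechtGen) : Perm (Ω ⊕ Ω) → ℂ) 1)⁻¹,
      intertwiningMap_outerSquare_ext ?_⟩
    change ((_ : ℂ) • f₀ _ : T.double.specht.toSubmodule) = _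
    rw [key f, key f₀, smul_smul]
    simp [symmetrizer_one, hc]

end Tableau

section Unitriangular

variable {R M ι : Type*} [Ring R] [AddCommGroup M] [Module R M] [Fintype ι] {χ b : ι → M}
  {c : ι → ι → R} {r : ι → ℕ}

lemma LinearIndependent.of_unitriangular (hχ : LinearIndependent R χ)
    (hb : ∀ i, b i = ∑ j, c i j • χ j) (hc : ∀ i, c i i = 1)
    (hr : ∀ i j, c i j ≠ 0 → j ≠ i → r i < r j) : LinearIndependent R b := by
  rw [Fintype.linearIndependent_iff] at hχ ⊢
  intro g hg
  have hsum : ∑ j, (∑ i, g i * c i j) • χ j = 0 := by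
    rw [← hg]
    simp only [Finset.sum_smul, hb, Finset.smul_sum, mul_smul]
    exact Finset.sum_comm
  suffices ∀ n i, r i = n → g i = 0 from fun i => this _ i rfl
  intro n
  induction n using Nat.strong_induction_on with
  | _ n ih =>
    rintro i rfl
    rw [← hχ _ hsum i, Finset.sum_eq_single i, hc, mul_one]
    · intro j _ hj
      by_cases h0 : c j i = 0
      · rw [h0, mul_zero]
      · rw [ih _ (hr j i h0 hj.symm) j rfl, zero_mul]
    · simp

lemma Submodule.span_range_eq_of_unitriangular
    (hb : ∀ i, b i = ∑ j, c i j • χ j) (hc : ∀ i, c i i = 1)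
    (hr : ∀ i j, c i j ≠ 0 → j ≠ i → r i < r j) :
    Submodule.span R (Set.range b) = Submodule.span R (Set.range χ) := by
  apply le_antisymm <;> rw [Submodule.span_le]
  · rintro _ ⟨i, rfl⟩
    rw [hb]
    exact Submodule.sum_mem _ fun j _ => Submodule.smul_mem _ _ (Submodule.subset_span ⟨j, rfl⟩)
  · suffices ∀ n i, Finset.univ.sup r - r i = n → χ i ∈ Submodule.span R (Set.range b) by
      rintro _ ⟨i, rfl⟩
      exact this _ i rfl
    intro n
    induction n using Nat.strong_induction_on with
    | _ n ih =>
      rintro i rfl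
      have h := hb i
      rw [← Finset.add_sum_erase _ _ (Finset.mem_univ i), hc, one_smul, ← sub_eq_iff_eq_add] at h
      rw [← h]
      refine Submodule.sub_mem _ (Submodule.subset_span ⟨i, rfl⟩)
        (Submodule.sum_mem _ fun j hj => ?_)
      by_cases h0 : c i j = 0
      · rw [h0, zero_smul]
        exact Submodule.zero_mem _
      · have h1 := hr i j h0 (Finset.ne_of_mem_erase hj)
        have h2 := Finset.le_sup (f := r) (Finset.mem_univ j)
        exact Submodule.smul_mem _ _ (ih _ (by omega) j rfl)

end Unitriangular

lemma YoungDiagram.card_ofRowLens (w : List ℕ) (hw : w.SortedGE) :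
    (ofRowLens w hw).card = w.sum := by
  change (YoungDiagram.cellsOfRowLens w).card = w.sum
  clear hw
  induction w with
  | nil => rfl
  | cons a w ih =>
    rw [YoungDiagram.cellsOfRowLens, Finset.card_union_of_disjoint, Finset.card_map, ih]
    · simp
    · rw [Finset.disjoint_left]
      rintro ⟨i, j⟩ h1 h2
      simp at h1 h2
      omega

namespace Nat.Partition

/-- The Young diagram of a partition. -/
def youngDiagram {n : ℕ} (p : Nat.Partition n) : YoungDiagram :=
  .ofRowLens (p.parts.sort (· ≥ ·)) (Multiset.pairwise_sort _ _).sortedGE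

lemma card_youngDiagram {n : ℕ} (p : Nat.Partition n) : p.youngDiagram.card = n := by
  rw [youngDiagram, YoungDiagram.card_ofRowLens, ← Multiset.sum_coe, Multiset.sort_eq, p.parts_sum]

lemma youngDiagram_injective {n : ℕ} :
    Function.Injective (youngDiagram : Nat.Partition n → YoungDiagram) := by
  have key : ∀ p : Nat.Partition n, (p.youngDiagram.rowLens : Multiset ℕ) = p.parts := fun p => by
    rw [youngDiagram, YoungDiagram.rowLens_ofRowLens_eq_self, Multiset.sort_eq]
    exact fun x hx => p.parts_pos ((Multiset.mem_sort _).1 hx)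
  intro p q h
  rw [Nat.Partition.ext_iff, ← key, h, key]

end Nat.Partition

namespace Tableau

open Equiv

variable {Ω : Type} [Fintype Ω] [DecidableEq Ω]

/-- A tableau whose shape is the Young diagram of a given partition. -/
noncomputable def ofPartition (p : Nat.Partition (Fintype.card Ω)) : Tableau Ω p.youngDiagram :=
  (exists_tableau p.card_youngDiagram).some

variable (Ω) in
lemma spechtChar_ofPartition_injective :
    Function.Injective fun p : Nat.Partition (Fintype.card Ω) => (ofPartition p).spechtChar :=
  fun _ _ h => Nat.Partition.youngDiagram_injective (shape_eq_of_spechtChar_eq _ h)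

lemma eq_sum_charPairing_spechtChar {f : Perm Ω → ℂ} (hf : ∀ g h, f (h * g * h⁻¹) = f g) :
    f = ∑ p : Nat.Partition (Fintype.card Ω),
      charPairing f (ofPartition p).spechtChar • (ofPartition p).spechtChar :=
  eq_sum_charPairing_smul (fun p => (ofPartition p).isIrrChar_spechtChar)
    (spechtChar_ofPartition_injective Ω)
    (fun _ _ => Perm.partition_eq_of_isConj.2) le_rfl hf

variable (Ω) in
lemma setOf_isIrrChar : {f | IsIrrChar (Perm Ω) f} =
    Set.range fun p : Nat.Partition (Fintype.card Ω) => (ofPartition p).spechtChar := by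
  ext f
  refine ⟨fun hf => ?_, ?_⟩
  · exact mem_range_of_isIrrChar (fun p => (ofPartition p).isIrrChar_spechtChar)
      (spechtChar_ofPartition_injective Ω) (fun _ _ => Perm.partition_eq_of_isConj.2) le_rfl hf
  · rintro ⟨p, rfl⟩
    exact (ofPartition p).isIrrChar_spechtChar

lemma exists_ofPartition_double (p : Nat.Partition (Fintype.card Ω)) :
    ∃ q : Nat.Partition (Fintype.card (Ω ⊕ Ω)),
      (ofPartition q).spechtChar = (ofPartition p).double.spechtChar :=
  (setOf_isIrrChar (Ω ⊕ Ω)).subset (ofPartition p).double.isIrrChar_spechtChar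

end Tableau

/-- there is a set `S` of irreducible characters of `S_{2w}`, of cardinality
`p(2w) - p(w)`, such that the characters `Ind_{S_w × S_w}^{S_{2w}} (χ ⊠ χ)` for
`χ ∈ Irr(S_w)` together with `S` form a `ℤ`-basis of the group of virtual characters of
`S_{2w}` (the `ℤ`-span of the irreducible characters inside the class functions). -/
theorem ind_diag_extends_to_basis (w : ℕ) (hw : 0 < w) :
    ∃ S : Set (Equiv.Perm (Fin w ⊕ Fin w) → ℂ),
      S ⊆ {f | IsIrrChar (Equiv.Perm (Fin w ⊕ Fin w)) f} ∧
      S.Finite ∧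
      S.ncard = Fintype.card (Nat.Partition (2 * w)) - Fintype.card (Nat.Partition w) ∧
      LinearIndependent ℤ
        (fun v : (gammaSet w ∪ S : Set (Equiv.Perm (Fin w ⊕ Fin w) → ℂ)) =>
          (v : Equiv.Perm (Fin w ⊕ Fin w) → ℂ)) ∧
      Submodule.span ℤ (gammaSet w ∪ S) =
        Submodule.span ℤ {f | IsIrrChar (Equiv.Perm (Fin w ⊕ Fin w)) f} := by
  let χ : Nat.Partition (Fintype.card (Fin w ⊕ Fin w)) → Equiv.Perm (Fin w ⊕ Fin w) → ℂ :=
    fun q => (Tableau.ofPartition q).spechtChar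
  let γ : Nat.Partition (Fintype.card (Fin w)) → Equiv.Perm (Fin w ⊕ Fin w) → ℂ :=
    fun p => (Tableau.ofPartition p).indSquare
  have hχinj : Function.Injective χ := Tableau.spechtChar_ofPartition_injective _
  have hχ : LinearIndependent ℤ χ :=
    (linearIndependent_of_isIrrChar (fun q => (Tableau.ofPartition q).isIrrChar_spechtChar)
      hχinj).restrict_scalars' ℤ
  choose d hd using Tableau.exists_ofPartition_double (Ω := Fin w)
  have hshape : ∀ p, (d p).youngDiagram = p.youngDiagram.double := fun p =>
    Tableau.shape_eq_of_spechtChar_eq _ (hd p)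
  have hdinj : Function.Injective d := fun p q h =>
    Nat.Partition.youngDiagram_injective (YoungDiagram.double_injective (by
      rw [← hshape, ← hshape, h]))
  let N : Nat.Partition (Fintype.card (Fin w)) →
      Nat.Partition (Fintype.card (Fin w ⊕ Fin w)) → ℤ := fun p q =>
    Module.finrank ℂ (IntertwiningMap (outerSquare (Tableau.ofPartition p).specht.toRepresentation)
      (Tableau.ofPartition q).spechtRes)
  have hN : ∀ p q, charPairing (γ p) (χ q) = N p q := fun p q => by
    simpa [N] using Tableau.charPairing_indSquare (Tableau.ofPartition p) (Tableau.ofPartition q)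
  let c := Function.extend d N fun q => Pi.single q 1
  let b := Function.extend d γ χ
  let r := fun q : Nat.Partition (Fintype.card (Fin w ⊕ Fin w)) => q.youngDiagram.rowSum
  have hb : ∀ q, b q = ∑ q', c q q' • χ q' := fun q => by
    by_cases hq : ∃ p, d p = q
    · obtain ⟨p, rfl⟩ := hq
      simp only [b, c, hdinj.extend_apply]
      refine (Tableau.eq_sum_charPairing_spechtChar fun g h => indHom_conj _ _ g h).trans ?_
      refine Finset.sum_congr rfl fun q _ => ?_
      rw [← Int.cast_smul_eq_zsmul ℂ, ← hN]
      rfl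
    · simp only [b, c, Function.extend_apply' _ _ _ hq]
      simp [Pi.single_apply]
  have hc : ∀ q, c q q = 1 := fun q => by
    by_cases hq : ∃ p, d p = q
    · obtain ⟨p, rfl⟩ := hq
      simp only [c, hdinj.extend_apply]
      have h := hN p (d p)
      rw [show χ (d p) = _ from hd p, Tableau.charPairing_indSquare_double] at h
      exact_mod_cast h.symm
    · simp [c, Function.extend_apply' _ _ _ hq]
  have hr : ∀ q q', c q q' ≠ 0 → q' ≠ q → r q < r q' := fun q q' h hne => by
    by_cases hq : ∃ p, d p = q
    · obtain ⟨p, rfl⟩ := hq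
      simp only [c, hdinj.extend_apply] at h
      rw [← Int.cast_ne_zero (α := ℂ), ← hN] at h
      obtain ⟨g, hg⟩ :=
        (Tableau.ofPartition p).exists_injective_of_charPairing_indSquare_ne_zero h
      have hle := (Tableau.ofPartition p).double.rowSum_le _ hg
      simp only [r, hshape]
      refine hle.lt_of_ne fun heq => hne (Nat.Partition.youngDiagram_injective ?_)
      rw [hshape, (Tableau.ofPartition p).double.shape_eq _ hg heq]
    · simp [c, Function.extend_apply' _ _ _ hq, hne] at h
  have hgamma : gammaSet w = Set.range γ := by
    rw [gammaSet, Tableau.setOf_isIrrChar, ← Set.range_comp]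
    rfl
  have hrange : gammaSet w ∪ χ '' (Set.range d)ᶜ = Set.range b := by
    rw [hgamma, Set.range_extend hdinj]
  refine ⟨χ '' (Set.range d)ᶜ, ?_, Set.toFinite _, ?_, ?_, ?_⟩
  · rintro _ ⟨q, -, rfl⟩
    exact (Tableau.ofPartition q).isIrrChar_spechtChar
  · rw [Set.ncard_image_of_injective _ hχinj, Set.ncard_compl, Set.ncard_range_of_injective hdinj,
      Nat.card_eq_fintype_card, Nat.card_eq_fintype_card, Fintype.card_sum, Fintype.card_fin,
      two_mul]
  · rw [hrange]
    exact (hχ.of_unitriangular hb hc hr).linearIndepOn_id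
  · rw [hrange, Tableau.setOf_isIrrChar, Submodule.span_range_eq_of_unitriangular hb hc hr]
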